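/- Let U be the presented group on generators ρ0, ρ1, ρ2 with relation set {ρ0^2, ρ1^2, ρ2^2, (ρ0ρ1)^6, (ρ1ρ2)^6, (ρ0ρ2)^2, (ρ2ρ1ρ0ρ1)^3}, and let N be the subgroup of U generated by the three elements x1 = ρ1(ρ0ρ2ρ1)^4ρ1, y1 = (ρ2ρ1ρ0)^4 and z1 = ρ1(ρ2ρ1ρ0)^4ρ1. Then N is a normal subgroup of U of index 192, and N is a free abelian group of rank 3, i.e. N is isomorphic to ℤ × ℤ × ℤ. -/

import Mathlib

namespace Stmt16

def r0 : FreeGroup (Fin 3) := FreeGroup.of 0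
def r1 : FreeGroup (Fin 3) := FreeGroup.of 1
def r2 : FreeGroup (Fin 3) := FreeGroup.of 2

/-- The relations of the presented group `U` of Section 5. -/
def rels : Set (FreeGroup (Fin 3)) :=
  {r0 ^ 2, r1 ^ 2, r2 ^ 2, (r0 * r1) ^ 6, (r1 * r2) ^ 6, (r0 * r2) ^ 2,
   (r2 * r1 * r0 * r1) ^ 3}

abbrev U := PresentedGroup rels

def p0 : U := PresentedGroup.of 0
def p1 : U := PresentedGroup.of 1
def p2 : U := PresentedGroup.of 2

def x1 : U := p1 * (p0 * p2 * p1) ^ 4 * p1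
def y1 : U := (p2 * p1 * p0) ^ 4
def z1 : U := p1 * (p2 * p1 * p0) ^ 4 * p1

/-- The subgroup `N = ⟨x1, y1, z1⟩` of `U`. -/
def N : Subgroup U := Subgroup.closure {x1, y1, z1}

/-- The defining relations of `U`, written for three self-maps of a type. -/
structure Rel {X : Type*} (a b c : X → X) : Prop where
  aa : ∀ t, a (a t) = t
  bb : ∀ t, b (b t) = t
  cc : ∀ t, c (c t) = t
  ca : ∀ t, c (a t) = a (c t)
  ab : ∀ t, b (a (b (a (b (a (b t)))))) = a (b (a (b (a t))))
  bc : ∀ t, b (c (b (c (b (c (b t)))))) = c (b (c (b (c t))))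
  hole : ∀ t, b (a (b (c (b t)))) = c (b (a (b (c (b (a t))))))

namespace Rel

variable {X : Type*} {a b c : X → X}

theorem symm (h : Rel a b c) : Rel c b a where
  aa := h.cc
  bb := h.bb
  cc := h.aa
  ca t := (h.ca t).symm
  ab := h.bc
  bc := h.ab
  hole t := by
    have := congrArg (fun u => a (b (c (b (a (b (c u))))))) (h.hole (b (c (b (a (b t))))))
    simpa only [h.aa, h.bb, h.cc] using this.symm

theorem braid (h : Rel a b c) (t : X) : a (b (a (b (a (b t))))) = b (a (b (a (b (a t))))) := by
  simpa only [h.bb] using (h.ab (b t)).symm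

/-- In terms of `z = b (c b a)⁴ b`, this says `a z a z⁻¹ = 1`. -/
theorem conj_translation (h : Rel a b c) (t : X) :
    a (b (c (b (a (c (b (a (c (b (a (c (b (a (b (a (b (a (b (c (a (b (c (a (b (c (a (b
      (c (b t))))))))))))))))))))))))))))) = t := by
  rw [h.ab]
  simp only [h.aa, h.ca]
  rw [h.hole]
  simp only [h.aa, h.bb, h.cc, h.ca]
  rw [h.bc]
  simp only [h.cc, h.ca]
  rw [h.hole]
  simp only [h.aa, h.bb, h.cc]

end Rel

/-- Words in the generators, one for each coset of `N⟨ρ0, ρ1⟩`. -/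
def cosetWords : List (List (Fin 3)) :=
  [[], [2], [1, 2], [0, 1, 2], [2, 1, 2], [1, 0, 1, 2], [0, 2, 1, 2], [1, 2, 1, 2],
   [0, 1, 0, 1, 2], [0, 1, 2, 1, 2], [2, 1, 2, 1, 2], [1, 0, 1, 0, 1, 2], [1, 0, 1, 2, 1, 2],
   [0, 2, 1, 2, 1, 2], [2, 1, 0, 1, 0, 1, 2], [0, 1, 0, 1, 2, 1, 2]]

/-- Words representing the elements of the dihedral group `⟨ρ0, ρ1⟩`. -/
def dihedralWords : List (List (Fin 3)) :=
  [[], [0], [1, 0], [0, 1, 0], [1, 0, 1, 0], [0, 1, 0, 1, 0], [1, 0, 1, 0, 1, 0],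
   [1], [0, 1], [1, 0, 1], [0, 1, 0, 1], [1, 0, 1, 0, 1]]

section Words

variable {X : Type*} {f : Fin 3 → X → X}

theorem mem_cosetWords_map (h : Rel (f 0) (f 1) (f 2)) {o : X} (ho0 : f 0 o = o) (ho1 : f 1 o = o)
    (hx : ∀ t, f 1 (f 0 (f 2 (f 1 (f 0 (f 2 t))))) = f 0 (f 2 (f 1 (f 0 (f 2 (f 1 t))))))
    (i : Fin 3) {t : X} (ht : t ∈ cosetWords.map (List.foldr f o)) :
    f i t ∈ cosetWords.map (List.foldr f o) := by
  have h02 : f 0 (f 2 o) = f 2 o := by rw [← h.ca, ho0]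
  have h2101 : f 2 (f 1 (f 0 (f 1 (f 2 o)))) = f 1 (f 0 (f 1 (f 2 o))) := by
    have := h.hole (f 0 o)
    simpa only [h.aa, ho0, ho1] using this.symm
  have h1021 : f 1 (f 0 (f 2 (f 1 (f 2 o)))) = f 0 (f 2 (f 1 (f 2 o))) := by
    simpa only [h02, ho1] using hx o
  have h12121 : f 1 (f 2 (f 1 (f 2 (f 1 (f 2 o))))) = f 2 (f 1 (f 2 (f 1 (f 2 o)))) := by
    simpa only [ho1] using h.bc (f 1 o)
  have h010101 : f 0 (f 1 (f 0 (f 1 (f 0 (f 1 (f 2 o)))))) =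
      f 1 (f 0 (f 1 (f 0 (f 1 (f 2 o))))) := by
    rw [h.braid, h02]
  have h210121 : f 2 (f 1 (f 0 (f 1 (f 2 (f 1 (f 2 o)))))) =
      f 1 (f 0 (f 1 (f 2 (f 1 (f 2 o))))) := by
    simpa only [h.aa, h02] using (h.hole (f 0 (f 2 o))).symm
  have h1010121 : f 1 (f 0 (f 1 (f 0 (f 1 (f 2 (f 1 (f 2 o))))))) =
      f 0 (f 1 (f 0 (f 1 (f 2 (f 1 (f 2 o)))))) := by
    simpa only [h.aa, h1021] using (h.braid (f 0 (f 2 (f 1 (f 2 o))))).symm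
  have h12101012 : f 1 (f 2 (f 1 (f 0 (f 1 (f 0 (f 1 (f 2 o))))))) =
      f 0 (f 2 (f 1 (f 2 (f 1 (f 2 o))))) := by
    simpa only [h.ca, h.aa, h1021, h12121] using h.symm.hole (f 0 (f 1 (f 2 o)))
  have h02101012 : f 0 (f 2 (f 1 (f 0 (f 1 (f 0 (f 1 (f 2 o))))))) =
      f 2 (f 1 (f 0 (f 1 (f 0 (f 1 (f 2 o)))))) := by
    rw [← h.ca, h010101]
  have h1021212 : f 1 (f 0 (f 2 (f 1 (f 2 (f 1 (f 2 o)))))) =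
      f 2 (f 1 (f 0 (f 1 (f 0 (f 1 (f 2 o)))))) := by
    rw [← h12101012, h.bb]
  simp only [cosetWords, List.map_cons, List.map_nil, List.foldr_cons, List.foldr_nil,
    List.mem_cons, List.not_mem_nil, or_false] at ht ⊢
  fin_cases i <;>
  rcases ht with rfl | rfl | rfl | rfl | rfl | rfl | rfl | rfl | rfl | rfl | rfl | rfl | rfl | rfl |
    rfl | rfl <;>
  simp only [Fin.zero_eta, Fin.mk_one, Fin.reduceFinMk, h.aa, h.bb, h.cc, h.ca, ho0, ho1, h02,
    h2101, h1021, h12121, h010101, h210121, h1010121, h12101012, h02101012, h1021212, true_or,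
    or_true]

theorem mem_dihedralWords_map (h : Rel (f 0) (f 1) (f 2)) {o : X} {t : X}
    (ht : t ∈ dihedralWords.map (List.foldr f o)) :
    f 0 t ∈ dihedralWords.map (List.foldr f o) ∧ f 1 t ∈ dihedralWords.map (List.foldr f o) := by
  have h10 : f 0 (f 1 (f 0 (f 1 (f 0 (f 1 (f 0 o)))))) = f 1 (f 0 (f 1 (f 0 (f 1 o)))) := by
    rw [← h.braid, h.aa]
  simp only [dihedralWords, List.map_cons, List.map_nil, List.foldr_cons, List.foldr_nil,
    List.mem_cons, List.not_mem_nil, or_false] at ht ⊢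
  rcases ht with rfl | rfl | rfl | rfl | rfl | rfl | rfl | rfl | rfl | rfl | rfl | rfl <;>
  simp only [h.aa, h.bb, h10, h.braid, true_or, or_true, and_self]

end Words

theorem p0_mul_self : p0 * p0 = 1 := by
  rw [← pow_two]
  exact PresentedGroup.one_of_mem (rels := rels) (x := r0 ^ 2) (by simp [rels])

theorem p1_mul_self : p1 * p1 = 1 := by
  rw [← pow_two]
  exact PresentedGroup.one_of_mem (rels := rels) (x := r1 ^ 2) (by simp [rels])

theorem p2_mul_self : p2 * p2 = 1 := by
  rw [← pow_two]
  exact PresentedGroup.one_of_mem (rels := rels) (x := r2 ^ 2) (by simp [rels])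

theorem p0_inv : p0⁻¹ = p0 := inv_eq_of_mul_eq_one_left p0_mul_self

theorem p1_inv : p1⁻¹ = p1 := inv_eq_of_mul_eq_one_left p1_mul_self

theorem p2_inv : p2⁻¹ = p2 := inv_eq_of_mul_eq_one_left p2_mul_self

theorem of_inv (i : Fin 3) : (PresentedGroup.of i : U)⁻¹ = PresentedGroup.of i := by
  fin_cases i
  exacts [p0_inv, p1_inv, p2_inv]

/-- Induction by left multiplication by the generators. -/
theorem induction_mul_left {P : U → Prop} (one : P 1)
    (mul : ∀ i g, P g → P (PresentedGroup.of i * g)) (g : U) : P g := by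
  induction g using PresentedGroup.induction_on with | _ w
  suffices ∀ g, P g → P (PresentedGroup.mk rels w * g) by simpa using this 1 one
  induction w using FreeGroup.induction_on with
  | C1 => simp
  | of i => exact mul i
  | inv_of i _ =>
    intro g hg
    have := mul i g hg
    rwa [← of_inv] at this
  | mul v w hv hw => intro g hg; simpa [mul_assoc] using hv _ (hw _ hg)

section Action

variable {X : Type*} [MulAction U X]

theorem rel_smul : Rel (X := X) (p0 • ·) (p1 • ·) (p2 • ·) := by
  have aa (t : X) : p0 • p0 • t = t := by rw [smul_smul, p0_mul_self, one_smul]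
  have bb (t : X) : p1 • p1 • t = t := by rw [smul_smul, p1_mul_self, one_smul]
  have cc (t : X) : p2 • p2 • t = t := by rw [smul_smul, p2_mul_self, one_smul]
  have hab : (p0 * p1) ^ 6 = 1 :=
    PresentedGroup.one_of_mem (rels := rels) (x := (r0 * r1) ^ 6) (by simp [rels])
  have hbc : (p1 * p2) ^ 6 = 1 :=
    PresentedGroup.one_of_mem (rels := rels) (x := (r1 * r2) ^ 6) (by simp [rels])
  have hac : (p0 * p2) ^ 2 = 1 :=
    PresentedGroup.one_of_mem (rels := rels) (x := (r0 * r2) ^ 2) (by simp [rels])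
  have hhole : (p2 * p1 * p0 * p1) ^ 3 = 1 :=
    PresentedGroup.one_of_mem (rels := rels) (x := (r2 * r1 * r0 * r1) ^ 3) (by simp [rels])
  refine ⟨aa, bb, cc, fun t => ?_, fun t => ?_, fun t => ?_, fun t => ?_⟩
  · have := congrArg (· • p2 • p0 • t) hac
    simpa only [pow_succ, pow_zero, one_mul, mul_smul, one_smul, aa, bb, cc] using this.symm
  · have := congrArg (· • p1 • p0 • p1 • p0 • p1 • p0 • p1 • t) hab
    simpa only [pow_succ, pow_zero, one_mul, mul_smul, one_smul, aa, bb, cc] using this.symm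
  · have := congrArg (p1 • p2 • p1 • p2 • p1 • p2 • p1 • · • t) hbc
    simpa only [pow_succ, pow_zero, one_mul, mul_smul, one_smul, aa, bb, cc] using this.symm
  · have := congrArg (· • p1 • p0 • p1 • p2 • p1 • t) hhole
    simpa only [pow_succ, pow_zero, one_mul, mul_smul, one_smul, aa, bb, cc] using this.symm

end Action

/-- The affine maps of `R³` by which the generators act. -/
def affine (R : Type*) [CommRing R] : Fin 3 → R × R × R → R × R × R :=
  ![fun v => (-v.2.1, -v.1, v.2.2), fun v => (-v.1, v.2.2, v.2.1),
    fun v => (v.2.1 + 1, v.1 - 1, v.2.2)]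

theorem affine_involutive (R : Type*) [CommRing R] (i : Fin 3) :
    Function.Involutive (affine R i) := by
  fin_cases i <;> intro v <;> simp [affine]

/-- The action of `U` on `R³` by affine maps. -/
def affineHom (R : Type*) [CommRing R] : U →* Equiv.Perm (R × R × R) :=
  PresentedGroup.toGroup (f := fun i => (affine_involutive R i).toPerm) <| by
    simp only [rels, Set.mem_insert_iff, Set.mem_singleton_iff]
    rintro _ (rfl | rfl | rfl | rfl | rfl | rfl | rfl) <;> ext v <;>
    simp [r0, r1, r2, pow_succ, affine]

theorem affineHom_of (R : Type*) [CommRing R] (i : Fin 3) (v : R × R × R) :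
    affineHom R (PresentedGroup.of i) v = affine R i v := by
  simp [affineHom]

theorem affineHom_x1 (R : Type*) [CommRing R] :
    affineHom R x1 = Equiv.addLeft ((-4, 0, 0) : R × R × R) := by
  ext v <;> simp [x1, p0, p1, p2, pow_succ, affineHom_of, affine]; ring

theorem affineHom_y1 (R : Type*) [CommRing R] :
    affineHom R y1 = Equiv.addLeft ((0, -4, 0) : R × R × R) := by
  ext v <;> simp [y1, p0, p1, p2, pow_succ, affineHom_of, affine]; ring

theorem affineHom_z1 (R : Type*) [CommRing R] :
    affineHom R z1 = Equiv.addLeft ((0, 0, -4) : R × R × R) := by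
  ext v <;> simp [z1, p0, p1, p2, pow_succ, affineHom_of, affine]; ring

theorem mul_p0_cancel (t : U) : p0 * (p0 * t) = t := rel_smul.aa t

theorem mul_p1_cancel (t : U) : p1 * (p1 * t) = t := rel_smul.bb t

theorem mul_p2_cancel (t : U) : p2 * (p2 * t) = t := rel_smul.cc t

theorem p2_mul_p0_mul (t : U) : p2 * (p0 * t) = p0 * (p2 * t) := rel_smul.ca t

theorem p2_mul_p0 : p2 * p0 = p0 * p2 := by simpa using p2_mul_p0_mul 1

theorem semiconj_p0_x1 : SemiconjBy p0 x1 y1⁻¹ := by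
  simp only [SemiconjBy, x1, y1, pow_succ, pow_zero, one_mul, mul_inv_rev, mul_assoc, p0_inv,
    p1_inv, p2_inv, p1_mul_self, p2_mul_p0, mul_one]

theorem semiconj_p0_y1 : SemiconjBy p0 y1 x1⁻¹ := by
  simpa [p0_inv] using semiconj_p0_x1.inv_symm_left.inv_right

theorem semiconj_p0_z1 : SemiconjBy p0 z1 z1 := by
  have := (rel_smul (X := U)).conj_translation (z1 * p0)
  simp only [smul_eq_mul] at this
  rw [SemiconjBy, ← this]
  simp only [z1, pow_succ, pow_zero, one_mul, mul_assoc, p0_mul_self, mul_p0_cancel,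
    mul_p1_cancel, mul_p2_cancel, mul_one]

theorem semiconj_p1_x1 : SemiconjBy p1 x1 x1⁻¹ := by
  simp only [SemiconjBy, x1, pow_succ, pow_zero, one_mul, mul_inv_rev, mul_assoc, p0_inv,
    p1_inv, p2_inv, p1_mul_self, mul_p1_cancel, p2_mul_p0, mul_one]

theorem semiconj_p1_y1 : SemiconjBy p1 y1 z1 := by
  simp only [SemiconjBy, z1, y1, mul_assoc, p1_mul_self, mul_one]

theorem semiconj_p1_z1 : SemiconjBy p1 z1 y1 := by
  simpa [p1_inv] using semiconj_p1_y1.inv_symm_left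

theorem semiconj_p2_x1 : SemiconjBy p2 x1 y1 := by
  simp only [SemiconjBy, x1, y1, pow_succ, pow_zero, one_mul, mul_assoc, p1_mul_self, mul_one]

theorem semiconj_p2_y1 : SemiconjBy p2 y1 x1 := by
  simpa [p2_inv] using semiconj_p2_x1.inv_symm_left

theorem semiconj_p2_z1 : SemiconjBy p2 z1 z1 := by
  rw [← SemiconjBy.inv_right_iff]
  have := (rel_smul (X := U)).symm.conj_translation (z1⁻¹ * p2)
  simp only [smul_eq_mul] at this
  rw [SemiconjBy, ← this]
  simp only [z1, pow_succ, pow_zero, one_mul, mul_assoc, mul_inv_rev, p0_inv, p1_inv, p2_inv,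
    p2_mul_self, mul_p0_cancel, mul_p1_cancel, mul_p2_cancel, p2_mul_p0_mul, mul_one]

theorem x1_eq_pow : x1 = p1 * p0 * p2 * (p1 * p0 * p2) * (p1 * p0 * p2 * (p1 * p0 * p2)) := by
  simp only [x1, pow_succ, pow_zero, one_mul, mul_assoc, p1_mul_self, mul_one]

theorem y1_eq_pow : y1 = p2 * p1 * p0 * (p2 * p1 * p0) * (p2 * p1 * p0 * (p2 * p1 * p0)) := by
  simp only [y1, pow_succ, pow_zero, one_mul, mul_assoc]

theorem commute_x1_y1 : Commute x1 y1 := by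
  have hy : SemiconjBy (p1 * p0 * p2) y1 z1⁻¹ :=
    (semiconj_p1_y1.inv_right.mul_left semiconj_p0_x1).mul_left semiconj_p2_y1
  have hz : SemiconjBy (p1 * p0 * p2) z1 y1 :=
    (semiconj_p1_z1.mul_left semiconj_p0_z1).mul_left semiconj_p2_z1
  have h := hz.inv_right.mul_left hy
  rw [Commute, x1_eq_pow]
  simpa using h.inv_right.mul_left h

theorem commute_x1_z1 : Commute x1 z1 := by
  have hy : SemiconjBy (p1 * p0 * p2) y1 z1⁻¹ :=
    (semiconj_p1_y1.inv_right.mul_left semiconj_p0_x1).mul_left semiconj_p2_y1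
  have hz : SemiconjBy (p1 * p0 * p2) z1 y1 :=
    (semiconj_p1_z1.mul_left semiconj_p0_z1).mul_left semiconj_p2_z1
  have h := hy.mul_left hz
  rw [Commute, x1_eq_pow]
  simpa using h.inv_right.mul_left h

theorem commute_y1_z1 : Commute y1 z1 := by
  have hz : SemiconjBy (p2 * p1 * p0) z1 x1 :=
    (semiconj_p2_y1.mul_left semiconj_p1_z1).mul_left semiconj_p0_z1
  have hx : SemiconjBy (p2 * p1 * p0) x1 z1⁻¹ :=
    (semiconj_p2_z1.inv_right.mul_left semiconj_p1_y1.inv_right).mul_left semiconj_p0_x1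
  have h := hx.mul_left hz
  rw [Commute, y1_eq_pow]
  simpa using h.inv_right.mul_left h

theorem x1_mem : x1 ∈ N := Subgroup.subset_closure (by simp)

theorem y1_mem : y1 ∈ N := Subgroup.subset_closure (by simp)

theorem z1_mem : z1 ∈ N := Subgroup.subset_closure (by simp)

theorem conj_of_mem (i : Fin 3) {n : U} (hn : n ∈ N) :
    PresentedGroup.of i * n * (PresentedGroup.of i)⁻¹ ∈ N := by
  suffices N ≤ N.comap (MulAut.conj (PresentedGroup.of i : U)).toMonoidHom from this hn
  rw [N, Subgroup.closure_le, ← N]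
  have key {g m m' : U} (h : SemiconjBy g m m') (hm : m' ∈ N) : g * m * g⁻¹ ∈ N := by
    rwa [h.eq, mul_inv_cancel_right]
  fin_cases i <;> rintro _ (rfl | rfl | rfl)
  exacts [key semiconj_p0_x1 (inv_mem y1_mem), key semiconj_p0_y1 (inv_mem x1_mem),
    key semiconj_p0_z1 z1_mem, key semiconj_p1_x1 (inv_mem x1_mem), key semiconj_p1_y1 z1_mem,
    key semiconj_p1_z1 y1_mem, key semiconj_p2_x1 y1_mem, key semiconj_p2_y1 x1_mem,
    key semiconj_p2_z1 z1_mem]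

instance normal_N : N.Normal where
  conj_mem n hn g := by
    induction g using induction_mul_left with
    | one => simpa using hn
    | mul i g hg => simpa [mul_assoc] using conj_of_mem i hg

/-- The parametrization `(i, j, k) ↦ x1 ^ i * y1 ^ j * z1 ^ k` of `N`. -/
def translation : Multiplicative (ℤ × ℤ × ℤ) →* U where
  toFun v := x1 ^ v.toAdd.1 * (y1 ^ v.toAdd.2.1 * z1 ^ v.toAdd.2.2)
  map_one' := by simp
  map_mul' v w := by
    have hxy := commute_x1_y1.zpow_zpow w.toAdd.1 v.toAdd.2.1
    have hxz := commute_x1_z1.zpow_zpow w.toAdd.1 v.toAdd.2.2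
    have hyz := commute_y1_z1.zpow_zpow w.toAdd.2.1 v.toAdd.2.2
    simp only [toAdd_mul, Prod.fst_add, Prod.snd_add, zpow_add]
    rw [(hxy.mul_right hxz).symm.mul_mul_mul_comm, hyz.symm.mul_mul_mul_comm]

theorem translation_range : translation.range = N := by
  apply le_antisymm
  · rintro _ ⟨v, rfl⟩
    exact mul_mem (zpow_mem x1_mem _) (mul_mem (zpow_mem y1_mem _) (zpow_mem z1_mem _))
  · rw [N, Subgroup.closure_le]
    rintro _ (rfl | rfl | rfl)
    exacts [⟨.ofAdd (1, 0, 0), by simp [translation]⟩, ⟨.ofAdd (0, 1, 0), by simp [translation]⟩,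
      ⟨.ofAdd (0, 0, 1), by simp [translation]⟩]

theorem translation_injective : Function.Injective translation := by
  rw [injective_iff_map_eq_one]
  intro v hv
  have h := congrArg (fun g => affineHom ℤ g 0) hv
  simp [translation, affineHom_x1, affineHom_y1, affineHom_z1] at h
  exact Multiplicative.toAdd.injective (Prod.ext h.1 (Prod.ext h.2.1 h.2.2))

theorem affineHom_eq_one {n : U} (hn : n ∈ N) : affineHom (ZMod 4) n = 1 := by
  suffices N ≤ (affineHom (ZMod 4)).ker from this hn
  rw [N, Subgroup.closure_le]
  have h4 : (4 : ZMod 4) = 0 := rfl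
  rintro _ (rfl | rfl | rfl) <;>
  simp [affineHom_x1, affineHom_y1, affineHom_z1, h4, ← Prod.zero_eq_mk]

/-- Left multiplication of `U` by the generators. -/
abbrev genMul (i : Fin 3) (g : U) : U := PresentedGroup.of i * g

theorem affineHom_foldr (w : List (Fin 3)) (g : U) (v : ZMod 4 × ZMod 4 × ZMod 4) :
    affineHom (ZMod 4) (w.foldr genMul g) v =
      w.foldr (affine (ZMod 4)) (affineHom (ZMod 4) g v) := by
  induction w with
  | nil => rfl
  | cons i w ih => simp [ih, affineHom_of]

theorem smul_foldr {X : Type*} [MulAction U X] (w : List (Fin 3)) (g : U) (o : X) :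
    w.foldr genMul g • o = w.foldr (fun i t => (PresentedGroup.of i : U) • t) (g • o) := by
  induction w with
  | nil => rfl
  | cons i w ih => simp [mul_smul, ih]

theorem foldr_genMul (w : List (Fin 3)) (g : U) :
    w.foldr genMul g = w.foldr genMul 1 * g := by
  induction w with
  | nil => simp
  | cons i w ih => simp [ih, mul_assoc]

/-- The dihedral subgroup `⟨ρ0, ρ1⟩` of `U`. -/
def dihedral : Subgroup U := Subgroup.closure {p0, p1}

theorem exists_dihedralWord {d : U} (hd : d ∈ dihedral) :
    ∃ w ∈ dihedralWords, w.foldr genMul 1 = d := by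
  rw [← List.mem_map]
  have h (t : U) := mem_dihedralWords_map (f := genMul) (rel_smul (X := U)) (o := 1) (t := t)
  induction hd using Subgroup.closure_induction_left with
  | one => simp [dihedralWords]
  | mul_left g hg d _ ih =>
    obtain rfl | rfl := hg
    exacts [(h _ ih).1, (h _ ih).2]
  | inv_mul_cancel g hg d _ ih =>
    obtain rfl | rfl := hg
    · rw [p0_inv]
      exact (h _ ih).1
    · rw [p1_inv]
      exact (h _ ih).2

theorem exists_cosetWord (g : U) :
    ∃ w ∈ cosetWords, (w.foldr genMul 1)⁻¹ * g ∈ dihedral ⊔ N := by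
  let f (i : Fin 3) (t : U ⧸ (dihedral ⊔ N)) := (PresentedGroup.of i : U) • t
  let o : U ⧸ (dihedral ⊔ N) := (1 : U)
  have hp0 : PresentedGroup.of 0 ∈ dihedral ⊔ N :=
    Subgroup.mem_sup_left (Subgroup.subset_closure (.inl rfl))
  have hp1 : PresentedGroup.of 1 ∈ dihedral ⊔ N :=
    Subgroup.mem_sup_left (Subgroup.subset_closure (.inr rfl))
  have ho0 : f 0 o = o := QuotientGroup.eq.2 (by simpa using hp0)
  have ho1 : f 1 o = o := QuotientGroup.eq.2 (by simpa using hp1)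
  have hr : Rel (f 0) (f 1) (f 2) := rel_smul
  have hx1 (t : U ⧸ (dihedral ⊔ N)) : x1 • t = t := by
    induction t using QuotientGroup.induction_on with | _ u
    refine QuotientGroup.eq.2 (Subgroup.mem_sup_right ?_)
    simpa [mul_assoc] using normal_N.conj_mem _ (inv_mem x1_mem) u⁻¹
  have hx (t) : f 1 (f 0 (f 2 (f 1 (f 0 (f 2 t))))) = f 0 (f 2 (f 1 (f 0 (f 2 (f 1 t))))) := by
    have := hx1 (f 2 (f 0 (f 1 (f 2 (f 0 (f 1 t))))))
    simp only [x1_eq_pow, mul_smul] at this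
    change f 1 (f 0 (f 2 (f 1 (f 0 (f 2 (f 1 (f 0 (f 2 (f 1 (f 0 (f 2 _))))))))))) = _ at this
    simpa only [hr.aa, hr.bb, hr.cc, hr.ca] using this
  have hmem : g • o ∈ cosetWords.map (List.foldr f o) := by
    induction g using induction_mul_left with
    | one => simp [cosetWords]
    | mul i g ih =>
      rw [mul_smul]
      exact mem_cosetWords_map hr ho0 ho1 hx i ih
  obtain ⟨w, hw, h⟩ := List.mem_map.1 hmem
  refine ⟨w, hw, QuotientGroup.eq.1 ?_⟩
  have := smul_foldr w 1 o
  rw [one_smul] at this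
  simpa [o] using this.trans h

theorem card_quotient : Nat.card (U ⧸ N) = 192 := by
  let f (v : Fin cosetWords.length × Fin dihedralWords.length) : U ⧸ N :=
    ((cosetWords.get v.1).foldr genMul ((dihedralWords.get v.2).foldr genMul 1) : U)
  have hf : Function.Bijective f := by
    constructor
    · rintro ⟨i, j⟩ ⟨i', j'⟩ h
      have h1 := affineHom_eq_one (QuotientGroup.eq.1 h)
      rw [map_mul, map_inv, inv_mul_eq_one] at h1
      have h2 (v) := DFunLike.congr_fun h1 v
      simp only [affineHom_foldr, map_one, Equiv.Perm.one_apply] at h2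
      have hd (j : Fin dihedralWords.length) :
          (dihedralWords.get j).foldr (affine (ZMod 4)) 0 = 0 := by
        revert j; decide
      have hi : Function.Injective fun i : Fin cosetWords.length =>
          (cosetWords.get i).foldr (affine (ZMod 4)) 0 := by decide
      have hj : Function.Injective fun j : Fin dihedralWords.length =>
          (dihedralWords.get j).foldr (affine (ZMod 4)) (0, 1, 2) := by decide
      obtain rfl : i = i' := hi (by simpa only [hd] using h2 0)
      have hinj (w : List (Fin 3)) : Function.Injective fun v => w.foldr (affine (ZMod 4)) v := by
        induction w with
        | nil => exact Function.injective_id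
        | cons k w ih => exact (affine_involutive _ k).injective.comp ih
      rw [hj (hinj _ (h2 (0, 1, 2)))]
    · intro q
      induction q using QuotientGroup.induction_on with | _ g
      obtain ⟨w, hw, h⟩ := exists_cosetWord g
      obtain ⟨d, hd, n, hn, hdn⟩ := Subgroup.mem_sup_of_normal_right.1 h
      obtain ⟨w', hw', rfl⟩ := exists_dihedralWord hd
      have hg : ((w.foldr genMul (w'.foldr genMul 1) : U) : U ⧸ N) = g := by
        rw [QuotientGroup.eq, foldr_genMul, mul_inv_rev, mul_assoc, ← hdn, inv_mul_cancel_left]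
        exact hn
      obtain ⟨i, rfl⟩ := List.get_of_mem hw
      obtain ⟨j, rfl⟩ := List.get_of_mem hw'
      exact ⟨(i, j), hg⟩
  rw [← Nat.card_eq_of_bijective f hf]
  simp [cosetWords, dihedralWords]

/-- Intermediate claim in the proof of Theorem 5.1: `N` is normal of index 192 in `U`
and is free abelian of rank 3. -/
theorem stmt_16 :
    N.Normal ∧ N.index = 192 ∧ Nonempty (N ≃* Multiplicative (ℤ × ℤ × ℤ)) := by
  refine ⟨normal_N, card_quotient, ⟨?_⟩⟩
  exact ((MulEquiv.subgroupCongr translation_range).symm.trans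
    (MonoidHom.ofInjective translation_injective).symm)


end Stmt16
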